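/- Let n ≥ 2, let ℓ₁ⁿ denote ℝⁿ with the ℓ¹ norm, and let e₁,…,eₙ denote the standard basis vectors. Let Y be a real reflexive, smooth Banach space and let T : ℓ₁ⁿ → Y be a nonzero bounded linear operator with ‖T‖ = 1. Then T is left symmetric in the operator space if and only if there exist a unit vector w ∈ Y, a norm-one linear functional f on ℓ₁ⁿ, and an index k ∈ {1,…,n} such that Tx = f(x)·w for all x, w is a left symmetric point of Y, |f(e_k)| = 1, and f(e_j) = 0 for all j ≠ k. -/

import Mathlib

open Filter Topology Set

/-- Birkhoff–James orthogonality: `x ⊥_B y` iff `‖x + t • y‖ ≥ ‖x‖` for all real `t`.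
For bounded linear operators this is orthogonality in the operator norm. -/
def BJOrth {E : Type*} [NormedAddCommGroup E] [NormedSpace ℝ E] (x y : E) : Prop :=
  ∀ t : ℝ, ‖x‖ ≤ ‖x + t • y‖

/-- A point `x` is left symmetric if `x ⊥_B y` implies `y ⊥_B x` for all `y`. -/
def LeftSymPt {E : Type*} [NormedAddCommGroup E] [NormedSpace ℝ E] (x : E) : Prop :=
  ∀ y : E, BJOrth x y → BJOrth y x

/-- A point `x` is right symmetric if `y ⊥_B x` implies `x ⊥_B y` for all `y`. -/
def RightSymPt {E : Type*} [NormedAddCommGroup E] [NormedSpace ℝ E] (x : E) : Prop :=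
  ∀ y : E, BJOrth y x → BJOrth x y

/-- A unit vector `x` is a smooth point if it has a unique norming functional. -/
def SmoothPt {E : Type*} [NormedAddCommGroup E] [NormedSpace ℝ E] (x : E) : Prop :=
  ∃! f : E →L[ℝ] ℝ, ‖f‖ = 1 ∧ f x = 1

/-- A normed space is reflexive if the canonical embedding into the double dual is surjective. -/
def ReflexiveSp (E : Type*) [NormedAddCommGroup E] [NormedSpace ℝ E] : Prop :=
  Function.Surjective (NormedSpace.inclusionInDoubleDual ℝ E)

/-- The Kadets–Klee property: weak convergence of a sequence together with convergence of norms
implies norm convergence. -/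
def KadetsKlee (E : Type*) [NormedAddCommGroup E] [NormedSpace ℝ E] : Prop :=
  ∀ (x : ℕ → E) (x₀ : E),
    (∀ f : E →L[ℝ] ℝ, Tendsto (fun n => f (x n)) atTop (nhds (f x₀))) →
    Tendsto (fun n => ‖x n‖) atTop (nhds ‖x₀‖) →
    Tendsto (fun n => ‖x n - x₀‖) atTop (nhds 0)

/-- The norm attaining set `M_T` of a bounded linear operator. -/
def normAttain {X Y : Type*} [NormedAddCommGroup X] [NormedSpace ℝ X]
    [NormedAddCommGroup Y] [NormedSpace ℝ Y] (T : X →L[ℝ] Y) : Set X :=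
  {x | ‖x‖ = 1 ∧ ‖T x‖ = ‖T‖}

/-- `inPlus u v` means `v ∈ u⁺`, i.e. `‖u + t • v‖ ≥ ‖u‖` for all `t ≥ 0`. -/
def inPlus {E : Type*} [NormedAddCommGroup E] [NormedSpace ℝ E] (u v : E) : Prop :=
  ∀ t : ℝ, 0 ≤ t → ‖u‖ ≤ ‖u + t • v‖

/-- `inMinus u v` means `v ∈ u⁻`, i.e. `‖u + t • v‖ ≥ ‖u‖` for all `t ≤ 0`. -/
def inMinus {E : Type*} [NormedAddCommGroup E] [NormedSpace ℝ E] (u v : E) : Prop :=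
  ∀ t : ℝ, t ≤ 0 → ‖u‖ ≤ ‖u + t • v‖

/-- The `k`-th standard basis vector of `ℓ₁ⁿ`. -/
noncomputable def stdBasisL1 (n : ℕ) (k : Fin n) : PiLp 1 (fun _ : Fin n => ℝ) :=
  (WithLp.equiv 1 (∀ _ : Fin n, ℝ)).symm (Pi.single k 1)

/-!
An operator `A` on `ℓ₁` over a finite index set is determined by the images of the basis vectors,
and `‖A‖ = maxᵢ ‖A eᵢ‖`; so `A ↦ (A eᵢ)ᵢ` is a linear isometry onto the sup-normed product `∏ᵢ Y`,
and the question becomes which points of a sup-normed product are left symmetric.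

For vectors supported on one coordinate, orthogonality is decided by that coordinate: small
perturbations in the other coordinates do not affect the norm. If `x` is left symmetric and its norm
is attained at coordinate `k`, then for `j ≠ k` the vector supported at `j` with value `xⱼ` is
orthogonal to `x` (since `x` is orthogonal to it), whence `xⱼ` is orthogonal to itself and vanishes.
So `x` is supported at `k`, and there its value must be left symmetric.
-/

section BirkhoffJames

variable {E F : Type*} [NormedAddCommGroup E] [NormedSpace ℝ E]
  [NormedAddCommGroup F] [NormedSpace ℝ F]

lemma BJOrth.of_eventually {x y : E} (h : ∀ᶠ t : ℝ in 𝓝 0, ‖x‖ ≤ ‖x + t • y‖) : BJOrth x y := by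
  have hconv : ConvexOn ℝ univ fun t : ℝ => ‖x + t • y‖ := by
    simpa [Function.comp_def, AffineMap.lineMap_apply, add_comm] using
      convexOn_univ_norm.comp_affineMap (AffineMap.lineMap (k := ℝ) x (x + y))
  have hmin : IsLocalMin (fun t : ℝ => ‖x + t • y‖) 0 := by
    simpa only [IsLocalMin, IsMinFilter, zero_smul, add_zero] using h
  intro t
  simpa using IsMinOn.of_isLocalMin_of_convex_univ hmin hconv t

lemma bjOrth_self_iff {x : E} : BJOrth x x ↔ x = 0 := by
  refine ⟨fun h => ?_, ?_⟩
  · simpa using h (-1)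
  · rintro rfl t
    simp

lemma bjOrth_zero_left (y : E) : BJOrth 0 y := fun t => by simp

lemma bjOrth_zero_right (x : E) : BJOrth x 0 := fun t => by simp

lemma BJOrth.smul_left {x y : E} (h : BJOrth x y) (c : ℝ) : BJOrth (c • x) y := by
  rcases eq_or_ne c 0 with rfl | hc
  · simpa using bjOrth_zero_left y
  intro t
  calc ‖c • x‖ = ‖c‖ * ‖x‖ := norm_smul c x
    _ ≤ ‖c‖ * ‖x + (c⁻¹ * t) • y‖ := by gcongr; exact h _
    _ = ‖c • x + t • y‖ := by rw [← norm_smul, smul_add, smul_smul, mul_inv_cancel_left₀ hc]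

lemma BJOrth.smul_right {x y : E} (h : BJOrth x y) (c : ℝ) : BJOrth x (c • y) := fun t => by
  simpa only [smul_smul] using h (t * c)

lemma bjOrth_map_iff (e : E ≃ₗᵢ[ℝ] F) {x y : E} :
    BJOrth (e x) (e y) ↔ BJOrth x y := by
  simp only [BJOrth, ← map_smul, ← map_add, e.norm_map]

lemma leftSymPt_map_iff (e : E ≃ₗᵢ[ℝ] F) {x : E} : LeftSymPt (e x) ↔ LeftSymPt x := by
  simp only [LeftSymPt, e.surjective.forall, bjOrth_map_iff]

lemma leftSymPt_zero : LeftSymPt (0 : E) := fun y _ => bjOrth_zero_right y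

lemma LeftSymPt.smul {x : E} (h : LeftSymPt x) (c : ℝ) : LeftSymPt (c • x) := by
  rcases eq_or_ne c 0 with rfl | hc
  · simpa using leftSymPt_zero
  intro y hy
  have hxy : BJOrth x y := by simpa [smul_smul, hc] using hy.smul_left c⁻¹
  exact (h y hxy).smul_right c

end BirkhoffJames

section Pi

variable {ι : Type*} [Fintype ι] [DecidableEq ι] {E : ι → Type*}
  [∀ i, NormedAddCommGroup (E i)] [∀ i, NormedSpace ℝ (E i)]

lemma bjOrth_piSingle_left_iff {k : ι} {w : E k} {y : ∀ i, E i} :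
    BJOrth (Pi.single k w) y ↔ BJOrth w (y k) := by
  refine ⟨fun h => ?_, fun h t => ?_⟩
  · rcases eq_or_ne w 0 with rfl | hw
    · exact bjOrth_zero_left _
    have hsmall : ∀ᶠ t : ℝ in 𝓝 0, ‖t • y‖ < ‖w‖ :=
      (Continuous.tendsto' (by fun_prop) 0 0 (by simp)).eventually_lt_const (norm_pos_iff.2 hw)
    refine .of_eventually (hsmall.mono fun t ht => ?_)
    by_contra! hlt
    refine (h t).not_gt ?_
    rw [Pi.norm_single, pi_norm_lt_iff (norm_pos_iff.2 hw)]
    intro i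
    rcases eq_or_ne i k with rfl | hik
    · simpa using hlt
    · simpa [hik] using (norm_le_pi_norm (t • y) i).trans_lt ht
  · calc ‖Pi.single k w‖ = ‖w‖ := Pi.norm_single w
      _ ≤ ‖w + t • y k‖ := h t
      _ ≤ ‖Pi.single k w + t • y‖ := by
        simpa using norm_le_pi_norm (Pi.single k w + t • y) k

lemma BJOrth.piSingle_right {k : ι} {w : E k} {y : ∀ i, E i} (h : BJOrth (y k) w) :
    BJOrth y (Pi.single k w) := fun t => by
  refine (pi_norm_le_iff_of_nonneg (norm_nonneg _)).2 fun i => ?_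
  refine le_trans ?_ (norm_le_pi_norm (y + t • Pi.single k w) i)
  rcases eq_or_ne i k with rfl | hik
  · simpa using h t
  · simp [hik]

lemma bjOrth_piSingle_of_norm_apply_eq {x : ∀ i, E i} {j k : ι} (hk : ‖x k‖ = ‖x‖) (hjk : j ≠ k)
    (w : E j) : BJOrth x (Pi.single j w) := fun t => by
  simpa [hk, hjk.symm] using norm_le_pi_norm (x + t • Pi.single j w) k

lemma leftSymPt_piSingle_iff {k : ι} {w : E k} :
    LeftSymPt (Pi.single k w) ↔ LeftSymPt w := by
  refine ⟨fun h v hv => ?_, fun h y hy => ?_⟩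
  · have horth : BJOrth (Pi.single k w) (Pi.single k v) :=
      bjOrth_piSingle_left_iff.2 (by simpa using hv)
    simpa using bjOrth_piSingle_left_iff.1 (h _ horth)
  · exact (h _ (bjOrth_piSingle_left_iff.1 hy)).piSingle_right

omit [DecidableEq ι] in
lemma LeftSymPt.apply_eq_zero_of_norm_apply_eq {x : ∀ i, E i} (hx : LeftSymPt x) {j k : ι}
    (hk : ‖x k‖ = ‖x‖) (hjk : j ≠ k) : x j = 0 := by
  classical
  exact bjOrth_self_iff.1 <| bjOrth_piSingle_left_iff.1 <|
    hx _ (bjOrth_piSingle_of_norm_apply_eq hk hjk (x j))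

lemma leftSymPt_pi_iff [Nonempty ι] {x : ∀ i, E i} :
    LeftSymPt x ↔ ∃ (k : ι) (w : E k), LeftSymPt w ∧ x = Pi.single k w := by
  refine ⟨fun hx => ?_, ?_⟩
  · obtain ⟨k, hmax⟩ := Finite.exists_max fun i => ‖x i‖
    have hk : ‖x k‖ = ‖x‖ :=
      (norm_le_pi_norm x k).antisymm ((pi_norm_le_iff_of_nonempty x).2 hmax)
    have hxk : x = Pi.single k (x k) := by
      ext j
      rcases eq_or_ne j k with rfl | hjk
      · simp
      · simp [hjk, hx.apply_eq_zero_of_norm_apply_eq hk hjk]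
    exact ⟨k, x k, leftSymPt_piSingle_iff.1 (hxk ▸ hx), hxk⟩
  · rintro ⟨k, w, hw, rfl⟩
    exact leftSymPt_piSingle_iff.2 hw

end Pi

section L1

variable {𝕜 ι Y : Type*} [NontriviallyNormedField 𝕜] [Fintype ι] [DecidableEq ι]
  [NormedAddCommGroup Y] [NormedSpace 𝕜 Y]

lemma sum_apply_smul_piLp_single (x : PiLp 1 fun _ : ι => 𝕜) :
    ∑ i, x i • PiLp.single 1 i (1 : 𝕜) = x := by
  ext j
  simp [Pi.single_apply]

lemma opNorm_le_of_norm_map_single_le (A : PiLp 1 (fun _ : ι => 𝕜) →L[𝕜] Y) {C : ℝ} (hC : 0 ≤ C)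
    (h : ∀ i, ‖A (PiLp.single 1 i 1)‖ ≤ C) : ‖A‖ ≤ C := by
  refine A.opNorm_le_bound hC fun x => ?_
  calc ‖A x‖ = ‖∑ i, x i • A (PiLp.single 1 i 1)‖ := by
        conv_lhs => rw [← sum_apply_smul_piLp_single x, map_sum]
        simp only [map_smul]
    _ ≤ ∑ i, ‖x i‖ * C := norm_sum_le_of_le _ fun i _ => by
        rw [norm_smul]
        gcongr
        exact h i
    _ = C * ‖x‖ := by rw [← Finset.sum_mul, PiLp.norm_eq_of_L1, mul_comm]

variable (𝕜 ι Y) in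
/-- Operators on `ℓ₁` over a finite index set, with the operator norm, as the sup-normed product of
copies of the codomain: `A` corresponds to the family `(A eᵢ)ᵢ`. -/
noncomputable def l1OpEquivPi :
    (PiLp 1 (fun _ : ι => 𝕜) →L[𝕜] Y) ≃ₗᵢ[𝕜] (ι → Y) :=
  .ofBounds
    { toFun A i := A (PiLp.single 1 i 1)
      invFun y := ∑ i, (PiLp.proj 1 (fun _ : ι => 𝕜) i).smulRight (y i)
      map_add' _ _ := rfl
      map_smul' _ _ := rfl
      left_inv A := by
        ext x
        conv_rhs => rw [← sum_apply_smul_piLp_single x, map_sum]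
        simp
      right_inv y := by
        ext i
        simp [PiLp.single_apply] }
    (fun A => (pi_norm_le_iff_of_nonneg (norm_nonneg A)).2 fun i => by
      simpa using A.le_opNorm (PiLp.single 1 i 1))
    (fun y => opNorm_le_of_norm_map_single_le _ (norm_nonneg y) fun i => by
      simpa [PiLp.single_apply] using norm_le_pi_norm y i)

lemma l1OpEquivPi_apply (A : PiLp 1 (fun _ : ι => 𝕜) →L[𝕜] Y) (i : ι) :
    l1OpEquivPi 𝕜 ι Y A i = A (PiLp.single 1 i 1) := rfl

lemma l1OpEquivPi_symm_single (k : ι) (w : Y) :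
    (l1OpEquivPi 𝕜 ι Y).symm (Pi.single k w) = (PiLp.proj 1 (fun _ : ι => 𝕜) k).smulRight w := by
  rw [LinearIsometryEquiv.symm_apply_eq]
  ext i
  simp [l1OpEquivPi_apply, PiLp.single_apply, Pi.single_apply, eq_comm]

omit [DecidableEq ι] in
lemma norm_proj_l1 (k : ι) : ‖PiLp.proj (𝕜 := 𝕜) 1 (fun _ : ι => 𝕜) k‖ = 1 := by
  classical
  have hproj : PiLp.proj (𝕜 := 𝕜) 1 (fun _ : ι => 𝕜) k =
      (l1OpEquivPi 𝕜 ι 𝕜).symm (Pi.single k 1) := by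
    rw [l1OpEquivPi_symm_single]
    ext x
    simp
  rw [hproj, LinearIsometryEquiv.norm_map, Pi.norm_single, norm_one]

lemma stdBasisL1_eq_single (n : ℕ) (k : Fin n) : stdBasisL1 n k = PiLp.single 1 k 1 := rfl

end L1

theorem left_symmetric_operator_on_l1n_characterization_general
    {ι Y : Type*} [Fintype ι] [DecidableEq ι] [Nonempty ι]
    [NormedAddCommGroup Y] [NormedSpace ℝ Y] (T : PiLp 1 (fun _ : ι => ℝ) →L[ℝ] Y) :
    LeftSymPt T ↔
      ∃ (w : Y) (f : PiLp 1 (fun _ : ι => ℝ) →L[ℝ] ℝ) (k : ι),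
        ‖w‖ = ‖T‖ ∧ ‖f‖ = 1 ∧ (∀ x, T x = f x • w) ∧ LeftSymPt w ∧
        |f (PiLp.single 1 k 1)| = 1 ∧ ∀ j, j ≠ k → f (PiLp.single 1 j 1) = 0 := by
  rw [← leftSymPt_map_iff (l1OpEquivPi ℝ ι Y), leftSymPt_pi_iff]
  constructor
  · rintro ⟨k, w, hw, hT⟩
    have hTw : T = (PiLp.proj 1 (fun _ : ι => ℝ) k).smulRight w := by
      rw [← l1OpEquivPi_symm_single, ← hT, LinearIsometryEquiv.symm_apply_apply]
    refine ⟨w, PiLp.proj 1 _ k, k, ?_, norm_proj_l1 k, by simp [hTw], hw, by simp,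
      fun j hj => by simp [hj.symm]⟩
    rw [← (l1OpEquivPi ℝ ι Y).norm_map T, hT, Pi.norm_single]
  · rintro ⟨w, f, k, -, -, hTf, hw, -, hf⟩
    refine ⟨k, f (PiLp.single 1 k 1) • w, hw.smul _, ?_⟩
    ext i
    rcases eq_or_ne i k with rfl | hik
    · simp [l1OpEquivPi_apply, hTf]
    · simp [l1OpEquivPi_apply, hTf, hf i hik, hik]

theorem left_symmetric_operator_on_l1n_characterization
    {Y : Type*} [NormedAddCommGroup Y] [NormedSpace ℝ Y] [CompleteSpace Y]
    (hYrefl : ReflexiveSp Y)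
    (hYsmooth : ∀ y : Y, ‖y‖ = 1 → SmoothPt y)
    (n : ℕ) (hn : 2 ≤ n)
    (T : PiLp 1 (fun _ : Fin n => ℝ) →L[ℝ] Y) (hT0 : T ≠ 0) (hTnorm : ‖T‖ = 1) :
    LeftSymPt T ↔
      ∃ (w : Y) (f : PiLp 1 (fun _ : Fin n => ℝ) →L[ℝ] ℝ) (k : Fin n),
        ‖w‖ = 1 ∧ ‖f‖ = 1 ∧ (∀ x, T x = f x • w) ∧ LeftSymPt w ∧
        |f (stdBasisL1 n k)| = 1 ∧ ∀ j : Fin n, j ≠ k → f (stdBasisL1 n j) = 0 := by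
  have : Nonempty (Fin n) := ⟨⟨0, by omega⟩⟩
  simpa only [hTnorm, stdBasisL1_eq_single] using
    left_symmetric_operator_on_l1n_characterization_general T
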